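/- Let γ be a tamely Liouville irrational number, with σ_γ(Q) ≤ C_γ (log Q)^{1/4 − ε₀} for all Q ≥ 2, for some ε₀ > 0 and C_γ > 0. Let 0 < ε₁ < 2ε₀ and C > 0, and let ψ be an approximation function satisfying ψ(q) ≤ C·q⁻¹(log log q)⁻² for all q ≥ 3, ψ(1) = ψ(2) = 0, and ψ(q) = 0 whenever Ω(q) > (log q)^{1/2 + ε₁}, where Ω(q) is the number of prime factors of q counted with multiplicity. Then there exist constants C′, C″ > 0 such that for all integers q ≥ 16: ∑_{1 ≤ q′ < q} (ψ(q)/q)·gcd(q′,q)·𝟙[‖γ(q − q′)/gcd(q,q′)‖ ≤ Δ(q,q′)/gcd(q,q′)] ≤ C′·ψ(q)·(log log q)⁻²·∑_{r | q} (log r)/r + C″·ψ(q). -/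

import Mathlib

open MeasureTheory Filter Real

/-- Distance from a real number to the nearest integer. -/
noncomputable def dnint (x : ℝ) : ℝ := |x - round x|

/-- `Δ(q,q') = qψ(q') + q'ψ(q)`. -/
noncomputable def Δfun (ψ : ℕ → ℝ) (q q' : ℕ) : ℝ := q * ψ q' + q' * ψ q

/-- `σ_γ(Q)`: the infimum of all `σ > 0` with `‖qγ‖ ≥ q^{-σ}` for all `2 ≤ q ≤ Q`. -/
noncomputable def sigmaExp (γ : ℝ) (Q : ℕ) : ℝ :=
  sInf {σ : ℝ | 0 < σ ∧ ∀ q : ℕ, 2 ≤ q → q ≤ Q → (q : ℝ) ^ (-σ) ≤ dnint (q * γ)}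

/-!
Let `σ_γ(Q) ≪ (log Q) ^ a`, let `ψ(q) = 0` when `Ω(q) > (log q) ^ b`, and put `L = log log q`,
`S ≍ (log q) ^ a` and `X = 2 ^ (log q) ^ b`, so that `q` has at most `X` divisors if `ψ(q) ≠ 0`.
Group the `q'` by `d = gcd(q,q')`, say `q = d r` and `q' = d t`. The overlap condition then implies
`‖(r - t)γ‖ ≪ r / (d t)`, with a further factor `L⁻²` when `q' ≥ √q`.

If `d ≥ X ^ (S + 2)`, then `‖nγ‖` is too large for all `n ≤ X`, so the `t > r / X` are `X`-separated
and there are `≪ r / X` values of `t` altogether; summed over the divisors this costs `O(1)`.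
For smaller `d` put `T = d L ^ 2`. Dirichlet's theorem and the Diophantine condition give a
denominator `s` with `T ≤ s ≪ T ^ S` such that the first `s / 2` multiples of `γ` are `1 / (2s)`
apart modulo `1`. Cutting `r / T < t ≤ r` dyadically leaves `≪ (log T) r / T` values of `t`, and
the sum of `(log T) / T` over the divisors is `≪ L⁻² ∑ (log d) / d + 1`. The second case needs
`T ^ (S + 2) ≪ q`, hence `X ^ ((S + 3) (S + 2)) ≪ q`, which holds when `b + 2a < 1`.
-/

lemma dnint_eq_norm (x : ℝ) : dnint x = ‖(x : UnitAddCircle)‖ := UnitAddCircle.norm_eq.symm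

lemma dnint_zero : dnint 0 = 0 := by simp [dnint_eq_norm]

lemma dnint_neg (x : ℝ) : dnint (-x) = dnint x := by simp [dnint_eq_norm]

lemma dnint_le_half (x : ℝ) : dnint x ≤ 1 / 2 := abs_sub_round x

lemma dnint_pos_of_irrational {x : ℝ} (hx : Irrational x) : 0 < dnint x :=
  abs_pos.mpr (sub_ne_zero.mpr (hx.ne_int _))

lemma dnint_le_dnint_add_abs_sub (x y : ℝ) : dnint x ≤ dnint y + |x - y| :=
  calc dnint x ≤ |x - round y| := round_le x _
    _ ≤ |x - y| + |y - round y| := abs_sub_le _ _ _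
    _ = dnint y + |x - y| := add_comm _ _

lemma dnint_sub_le (x y : ℝ) : dnint (x - y) ≤ dnint x + dnint y := by
  simpa only [dnint_eq_norm, AddCircle.coe_sub] using norm_sub_le _ _

lemma dnint_sub_le_abs_sub_round_sub (x y : ℝ) :
    dnint (x - y) ≤ |(x - round x) - (y - round y)| := by
  refine (round_le _ (round x - round y)).trans_eq ?_
  push_cast
  congr 1
  ring

lemma one_div_den_le_dnint_mul (ρ : ℚ) {m : ℕ} (hm : 0 < m) (hmd : m < ρ.den) :
    1 / (ρ.den : ℝ) ≤ dnint (m * ρ) := by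
  set k := round ((m : ℝ) * ρ) with hk
  have hden : (0 : ℝ) < ρ.den := by exact_mod_cast ρ.den_pos
  have hne : (m : ℤ) * ρ.num - k * ρ.den ≠ 0 := by
    intro h
    have hcop : IsCoprime (ρ.den : ℤ) ρ.num :=
      Int.isCoprime_iff_gcd_eq_one.mpr (Int.gcd_comm _ _ ▸ ρ.reduced)
    have hdvd : (ρ.den : ℤ) ∣ m :=
      hcop.dvd_of_dvd_mul_right ⟨k, by linarith⟩
    exact absurd (Int.le_of_dvd (by omega) hdvd) (by omega)
  have hint : (1 : ℝ) ≤ |(m : ℝ) * ρ.num - k * ρ.den| := by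
    exact_mod_cast Int.one_le_abs hne
  have hsub : (m : ℝ) * ρ - k = (m * ρ.num - k * ρ.den) / ρ.den := by
    rw [Rat.cast_def]
    field_simp
  rw [dnint, ← hk, hsub, abs_div, abs_of_pos hden]
  gcongr

lemma one_div_two_mul_den_le_dnint_mul {γ : ℝ} {ρ : ℚ} (hρ : |γ - ρ| ≤ 1 / (ρ.den : ℝ) ^ 2)
    {m : ℕ} (hm : 0 < m) (hmd : (m : ℝ) < ρ.den / 2) :
    1 / (2 * (ρ.den : ℝ)) ≤ dnint (m * γ) := by
  have hden : (0 : ℝ) < ρ.den := by exact_mod_cast ρ.den_pos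
  have hdist : |(m : ℝ) * ρ - m * γ| ≤ 1 / (2 * ρ.den) :=
    calc |(m : ℝ) * ρ - m * γ| = m * |γ - ρ| := by
          rw [← mul_sub, abs_mul, Nat.abs_cast, abs_sub_comm]
      _ ≤ ρ.den / 2 * (1 / (ρ.den : ℝ) ^ 2) := by gcongr
      _ = 1 / (2 * ρ.den) := by field_simp
  have hrat := one_div_den_le_dnint_mul ρ hm
    (by exact_mod_cast hmd.trans (half_lt_self hden))
  have htriangle := dnint_le_dnint_add_abs_sub (m * (ρ : ℝ)) (m * γ)
  have hhalves : 1 / (ρ.den : ℝ) = 1 / (2 * ρ.den) + 1 / (2 * ρ.den) := by field_simp; norm_num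
  linarith

/-- The finite-range Diophantine condition `‖nγ‖ ≥ c n^{-S}` for `1 ≤ n ≤ M`. For `c = 1` and
`n ≥ 2` this is the condition defining `σ_γ(M)`; the constant `c` makes room for `n = 1`. -/
def DiophantineUpTo (γ c S M : ℝ) : Prop :=
  ∀ n : ℕ, 0 < n → (n : ℝ) ≤ M → c * (n : ℝ) ^ (-S) ≤ dnint (n * γ)

namespace DiophantineUpTo

variable {γ c S M : ℝ}

lemma mono {M' : ℝ} (h : DiophantineUpTo γ c S M) (hM : M' ≤ M) : DiophantineUpTo γ c S M' :=
  fun n hn hnM => h n hn (hnM.trans hM)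

lemma div_rpow_le_dnint (h : DiophantineUpTo γ c S M) (hc : 0 ≤ c) (hS : 0 ≤ S) {n : ℕ}
    (hn : 0 < n) (hnM : (n : ℝ) ≤ M) : c / M ^ S ≤ dnint (n * γ) := by
  have hn' : (0 : ℝ) < n := by exact_mod_cast hn
  refine le_trans ?_ (h n hn hnM)
  rw [div_eq_mul_inv, ← Real.rpow_neg (hn'.le.trans hnM)]
  exact mul_le_mul_of_nonneg_left (Real.rpow_le_rpow_of_nonpos hn' hnM (by linarith)) hc

-- Dirichlet's theorem with `N = ⌊T ^ S / c⌋`: a denominator below `T` would violate the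
-- Diophantine condition.
lemma exists_separating_denominator {T : ℝ} (hc : 0 < c) (hc1 : c ≤ 1) (hS : 0 ≤ S) (hT : 1 ≤ T)
    (h : DiophantineUpTo γ c S (T ^ S / c)) :
    ∃ s : ℕ, T ≤ s ∧ (s : ℝ) ≤ T ^ S / c ∧
      ∀ m : ℕ, 0 < m → (m : ℝ) < s / 2 → 1 / (2 * (s : ℝ)) ≤ dnint (m * γ) := by
  set N := ⌊T ^ S / c⌋₊
  have hTS : 1 ≤ T ^ S := Real.one_le_rpow hT hS
  have hone : 1 ≤ T ^ S / c := (one_le_div hc).mpr (hc1.trans hTS)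
  have hNle : (N : ℝ) ≤ T ^ S / c := Nat.floor_le (by linarith)
  obtain ⟨ρ, hρ, hden⟩ :=
    Real.exists_rat_abs_sub_le_and_den_le γ (Nat.floor_pos.mpr hone)
  have hden0 : (0 : ℝ) < ρ.den := by exact_mod_cast ρ.den_pos
  have hdenN : (ρ.den : ℝ) ≤ N := by exact_mod_cast hden
  have hdist : (ρ.den : ℝ) * |γ - ρ| < c / T ^ S :=
    calc (ρ.den : ℝ) * |γ - ρ| ≤ ρ.den * (1 / ((N + 1) * ρ.den)) := by gcongr
      _ = 1 / (N + 1) := by field_simp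
      _ < 1 / (T ^ S / c) := one_div_lt_one_div_of_lt (by positivity) (Nat.lt_floor_add_one _)
      _ = c / T ^ S := one_div_div _ _
  refine ⟨ρ.den, ?_, hdenN.trans hNle, fun m hm hmd => one_div_two_mul_den_le_dnint_mul ?_ hm hmd⟩
  · by_contra! hlt
    have hdio : c * (ρ.den : ℝ) ^ (-S) ≤ dnint (ρ.den * γ) :=
      h ρ.den ρ.den_pos (hdenN.trans hNle)
    have hlow : c / T ^ S ≤ c * (ρ.den : ℝ) ^ (-S) := by
      rw [div_eq_mul_inv, ← Real.rpow_neg (by linarith)]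
      gcongr ?_ * ?_
      exact Real.rpow_le_rpow_of_nonpos hden0 hlt.le (by linarith)
    have hup : dnint (ρ.den * γ) ≤ ρ.den * |γ - ρ| :=
      calc dnint (ρ.den * γ) ≤ |(ρ.den : ℝ) * γ - ρ.num| := round_le _ _
        _ = |(ρ.den : ℝ) * (γ - ρ)| := by
          rw [mul_sub, ← Rat.cast_natCast ρ.den, ← Rat.cast_mul, Rat.den_mul_eq_num,
            Rat.cast_intCast]
        _ = ρ.den * |γ - ρ| := by rw [abs_mul, abs_of_pos hden0]
    linarith
  · refine hρ.trans (one_div_le_one_div_of_le (by positivity) ?_)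
    rw [sq]
    gcongr
    linarith

end DiophantineUpTo

lemma card_Icc_zero_floor_le {y : ℝ} (hy : 0 ≤ y) :
    ((Finset.Icc 0 ⌊y⌋).card : ℝ) ≤ y + 1 := by
  have hcard : ((Finset.Icc 0 ⌊y⌋).card : ℤ) = ⌊y⌋ + 1 := by
    have hfloor : 0 ≤ ⌊y⌋ := Int.floor_nonneg.mpr hy
    rw [Int.card_Icc]
    omega
  calc ((Finset.Icc 0 ⌊y⌋).card : ℝ) = (⌊y⌋ : ℝ) + 1 := by exact_mod_cast hcard
    _ ≤ y + 1 := by gcongr; exact Int.floor_le _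

lemma card_le_div_add_one_of_pairwise_separated {ι : Type*} {F : Finset ι} {x : ι → ℝ}
    {a b η : ℝ} (hη : 0 < η) (hab : a ≤ b) (hmem : ∀ i ∈ F, x i ∈ Set.Icc a b)
    (hsep : (F : Set ι).Pairwise fun i j => η ≤ |x i - x j|) :
    (F.card : ℝ) ≤ (b - a) / η + 1 := by
  have hmaps : ∀ i ∈ F, ⌊(x i - a) / η⌋ ∈ Finset.Icc 0 ⌊(b - a) / η⌋ := by
    intro i hi
    obtain ⟨hai, hib⟩ := hmem i hi
    rw [Finset.mem_Icc]
    exact ⟨Int.floor_nonneg.mpr (div_nonneg (by linarith) hη.le), by gcongr⟩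
  have hinj : Set.InjOn (fun i => ⌊(x i - a) / η⌋) (F : Set ι) := by
    intro i hi j hj hij
    by_contra hne
    have hlt := Int.abs_sub_lt_one_of_floor_eq_floor hij
    rw [← sub_div, sub_sub_sub_cancel_right, abs_div, abs_of_pos hη, div_lt_one hη] at hlt
    exact hlt.not_ge (hsep hi hj hne)
  calc (F.card : ℝ) ≤ (Finset.Icc 0 ⌊(b - a) / η⌋).card := by
        exact_mod_cast Finset.card_le_card_of_injOn _ hmaps hinj
    _ ≤ (b - a) / η + 1 := card_Icc_zero_floor_le (div_nonneg (by linarith) hη.le)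

lemma exists_natCast_eq_abs_sub {n₁ n₂ : ℕ} (hne : n₁ ≠ n₂) (γ : ℝ) :
    ∃ m : ℕ, 0 < m ∧ (m : ℝ) = |(n₁ : ℝ) - n₂| ∧ dnint (m * γ) = dnint ((n₁ - n₂) * γ) := by
  rcases hne.lt_or_gt with h | h
  · have hlt : (n₁ : ℝ) < n₂ := by exact_mod_cast h
    refine ⟨n₂ - n₁, by omega, ?_, ?_⟩
    · rw [Nat.cast_sub h.le, abs_sub_comm, abs_of_pos (by linarith)]
    · rw [Nat.cast_sub h.le, ← dnint_neg]
      congr 1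
      ring
  · have hlt : (n₂ : ℝ) < n₁ := by exact_mod_cast h
    refine ⟨n₁ - n₂, by omega, ?_, ?_⟩
    · rw [Nat.cast_sub h.le, abs_of_pos (by linarith)]
    · rw [Nat.cast_sub h.le]

lemma card_le_of_dyadic_blocks {ι : Type*} {F : Finset ι} {x : ι → ℝ} {T N : ℝ} (hT : 1 ≤ T)
    (hx : ∀ i ∈ F, 1 ≤ x i ∧ x i ≤ T)
    (hblock : ∀ y, 1 ≤ y → y ≤ T → ((F.filter fun i => y ≤ x i ∧ x i ≤ 2 * y).card : ℝ) ≤ N) :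
    (F.card : ℝ) ≤ (logb 2 T + 1) * N := by
  have hN : 0 ≤ N := (Nat.cast_nonneg _).trans (hblock 1 le_rfl hT)
  have hlogT : 0 ≤ logb 2 T := Real.logb_nonneg one_lt_two hT
  set level : ι → ℕ := fun i => ⌊logb 2 (x i)⌋₊
  have hmaps : ∀ i ∈ F, level i ∈ Finset.range (⌊logb 2 T⌋₊ + 1) := by
    intro i hi
    rw [Finset.mem_range, Nat.lt_succ_iff]
    exact Nat.floor_le_floor
      (Real.logb_le_logb_of_le one_lt_two (by linarith [(hx i hi).1]) (hx i hi).2)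
  have hfibre : ∀ j ∈ Finset.range (⌊logb 2 T⌋₊ + 1),
      ((F.filter fun i => level i = j).card : ℝ) ≤ N := by
    intro j hj
    have hjT : (2 : ℝ) ^ j ≤ T := by
      rw [← Real.rpow_natCast, ← Real.le_logb_iff_rpow_le one_lt_two (by linarith)]
      exact (Nat.le_floor_iff hlogT).mp (Nat.lt_succ_iff.mp (Finset.mem_range.mp hj))
    refine le_trans ?_ (hblock (2 ^ j) (one_le_pow₀ one_le_two) hjT)
    norm_cast
    refine Finset.card_le_card fun i hi => ?_
    obtain ⟨hiF, rfl⟩ := Finset.mem_filter.mp hi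
    have hpos : 0 < x i := by linarith [(hx i hiF).1]
    refine Finset.mem_filter.mpr ⟨hiF, ?_, ?_⟩
    · push_cast
      rw [← Real.rpow_natCast, ← Real.le_logb_iff_rpow_le one_lt_two hpos]
      exact Nat.floor_le (Real.logb_nonneg one_lt_two (hx i hiF).1)
    · push_cast
      rw [← pow_succ', ← Real.rpow_natCast, ← Real.logb_le_iff_le_rpow one_lt_two hpos]
      push_cast
      exact (Nat.lt_floor_add_one _).le
  calc (F.card : ℝ)
      = ∑ j ∈ Finset.range (⌊logb 2 T⌋₊ + 1), ((F.filter fun i => level i = j).card : ℝ) := by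
        exact_mod_cast Finset.card_eq_sum_card_fiberwise hmaps
    _ ≤ ∑ _j ∈ Finset.range (⌊logb 2 T⌋₊ + 1), N := Finset.sum_le_sum hfibre
    _ = (⌊logb 2 T⌋₊ + 1) * N := by simp
    _ ≤ (logb 2 T + 1) * N := by gcongr; exact Nat.floor_le hlogT

section Counting

variable {γ β δ η w : ℝ} {F : Finset ℕ}

lemma card_le_of_two_mul_lt_dnint {r : ℕ} (hw : 0 < w) (hδ : 0 ≤ δ)
    (hsep : ∀ m : ℕ, 0 < m → (m : ℝ) < w → 2 * δ < dnint (m * γ))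
    (hF : ∀ n ∈ F, n < r ∧ dnint (r * γ - n * γ) ≤ δ) :
    (F.card : ℝ) ≤ r / w := by
  have hnear : ∀ n ∈ insert r F, n ≤ r ∧ dnint (r * γ - n * γ) ≤ δ := by
    intro n hn
    rcases Finset.mem_insert.mp hn with rfl | hn
    · exact ⟨le_rfl, by rwa [sub_self, dnint_zero]⟩
    · exact ⟨(hF n hn).1.le, (hF n hn).2⟩
  have hpair : ((insert r F : Finset ℕ) : Set ℕ).Pairwise
      fun n₁ n₂ : ℕ => w ≤ |(n₁ : ℝ) - n₂| := by
    intro n₁ h₁ n₂ h₂ hne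
    by_contra! hlt
    obtain ⟨m, hm, hmabs, hmγ⟩ := exists_natCast_eq_abs_sub hne γ
    have hlow := hsep m hm (hmabs ▸ hlt)
    have hup := dnint_sub_le (r * γ - n₂ * γ) (r * γ - n₁ * γ)
    rw [sub_sub_sub_cancel_left, ← sub_mul, ← hmγ] at hup
    linarith [(hnear n₁ h₁).2, (hnear n₂ h₂).2]
  have hcard := card_le_div_add_one_of_pairwise_separated hw (Nat.cast_nonneg r)
    (fun n hn => ⟨Nat.cast_nonneg n, by exact_mod_cast (hnear n hn).1⟩) hpair
  rw [Finset.card_insert_of_notMem fun hr => (hF r hr).1.false] at hcard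
  push_cast at hcard
  rw [sub_zero] at hcard
  linarith

lemma card_le_of_block (hη : 0 < η) (hδ : 0 ≤ δ)
    (hsep : ∀ m : ℕ, 0 < m → (m : ℝ) < w → η ≤ dnint (m * γ))
    (hblock : ∀ n₁ ∈ F, ∀ n₂ ∈ F, |(n₁ : ℝ) - n₂| < w)
    (hF : ∀ n ∈ F, dnint (β - n * γ) ≤ δ) :
    (F.card : ℝ) ≤ 2 * δ / η + 1 := by
  set x : ℕ → ℝ := fun n => (β - n * γ) - round (β - n * γ)
  have hpair : (F : Set ℕ).Pairwise fun n₁ n₂ => η ≤ |x n₁ - x n₂| := by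
    intro n₁ h₁ n₂ h₂ hne
    obtain ⟨m, hm, hmabs, hmγ⟩ := exists_natCast_eq_abs_sub hne γ
    calc η ≤ dnint (m * γ) := hsep m hm (hmabs ▸ hblock n₁ h₁ n₂ h₂)
      _ = dnint ((β - n₁ * γ) - (β - n₂ * γ)) := by
        rw [hmγ, ← dnint_neg]
        congr 1
        ring
      _ ≤ |x n₁ - x n₂| := dnint_sub_le_abs_sub_round_sub _ _
  have hcard := card_le_div_add_one_of_pairwise_separated hη (by linarith : -δ ≤ δ)
    (fun n hn => abs_le.mp (hF n hn)) hpair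
  rwa [sub_neg_eq_add, ← two_mul] at hcard

lemma card_le_of_separated_dnint {B : ℝ} (hη : 0 < η) (hδ : 0 ≤ δ) (hw : 0 < w) (hB : 0 ≤ B)
    (hsep : ∀ m : ℕ, 0 < m → (m : ℝ) < w → η ≤ dnint (m * γ))
    (hF : ∀ n ∈ F, (n : ℝ) ≤ B ∧ dnint (β - n * γ) ≤ δ) :
    (F.card : ℝ) ≤ (B / w + 1) * (2 * δ / η + 1) := by
  have hmaps : ∀ n ∈ F, ⌊(n : ℝ) / w⌋ ∈ Finset.Icc 0 ⌊B / w⌋ := by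
    intro n hn
    rw [Finset.mem_Icc]
    exact ⟨Int.floor_nonneg.mpr (by positivity), by gcongr; exact (hF n hn).1⟩
  have hfibre : ∀ k ∈ Finset.Icc 0 ⌊B / w⌋,
      ((F.filter fun n : ℕ => ⌊(n : ℝ) / w⌋ = k).card : ℝ) ≤ 2 * δ / η + 1 := by
    intro k _
    refine card_le_of_block hη hδ hsep (fun n₁ h₁ n₂ h₂ => ?_)
      fun n hn => (hF n (Finset.mem_filter.mp hn).1).2
    have hlt := Int.abs_sub_lt_one_of_floor_eq_floor
      ((Finset.mem_filter.mp h₁).2.trans (Finset.mem_filter.mp h₂).2.symm)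
    rwa [← sub_div, abs_div, abs_of_pos hw, div_lt_one hw] at hlt
  calc (F.card : ℝ)
      = ∑ k ∈ Finset.Icc 0 ⌊B / w⌋, ((F.filter fun n : ℕ => ⌊(n : ℝ) / w⌋ = k).card : ℝ) := by
        exact_mod_cast Finset.card_eq_sum_card_fiberwise hmaps
    _ ≤ ∑ _k ∈ Finset.Icc 0 ⌊B / w⌋, (2 * δ / η + 1) := Finset.sum_le_sum hfibre
    _ = (Finset.Icc 0 ⌊B / w⌋).card * (2 * δ / η + 1) := by
        rw [Finset.sum_const, nsmul_eq_mul]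
    _ ≤ (B / w + 1) * (2 * δ / η + 1) := by
        gcongr
        exact card_Icc_zero_floor_le (by positivity)

lemma card_le_fifteen_mul {B : ℝ} {s : ℕ} (hs : 0 < s) (hsB : s ≤ B) (hsδ : 1 ≤ s * δ)
    (hsep : ∀ m : ℕ, 0 < m → (m : ℝ) < s / 2 → 1 / (2 * (s : ℝ)) ≤ dnint (m * γ))
    (hF : ∀ n ∈ F, (n : ℝ) ≤ B ∧ dnint (β - n * γ) ≤ δ) :
    (F.card : ℝ) ≤ 15 * B * δ := by
  have hs' : (0 : ℝ) < s := by exact_mod_cast hs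
  have hB : 0 ≤ B := hs'.le.trans hsB
  have hδ : 0 ≤ δ := by
    by_contra! hneg
    linarith [mul_neg_of_pos_of_neg hs' hneg]
  have hblocks : B / (s / 2) + 1 ≤ 3 * (B / s) := by
    have : 1 ≤ B / s := (one_le_div hs').mpr hsB
    have : B / (s / 2 : ℝ) = 2 * (B / s) := by field_simp
    linarith
  have hpoints : 2 * δ / (1 / (2 * s)) + 1 ≤ 5 * (s * δ) := by
    have : 2 * δ / (1 / (2 * (s : ℝ))) = 4 * (s * δ) := by field_simp; ring
    linarith
  calc (F.card : ℝ)
      ≤ (B / (s / 2) + 1) * (2 * δ / (1 / (2 * s)) + 1) :=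
        card_le_of_separated_dnint (by positivity) hδ (by positivity) hB hsep hF
    _ ≤ 3 * (B / s) * (5 * (s * δ)) := by gcongr
    _ = 15 * B * δ := by field_simp; ring

lemma card_le_thirty_mul_of_dyadic {κ y : ℝ} {r s : ℕ} (hs : 0 < s) (hy : 1 ≤ y)
    (hsr : s * y ≤ r) (hκ : 1 ≤ κ * s)
    (hsep : ∀ m : ℕ, 0 < m → (m : ℝ) < s / 2 → 1 / (2 * (s : ℝ)) ≤ dnint (m * γ))
    (hF : ∀ t ∈ F, 0 < t ∧ y ≤ r / t ∧ (r : ℝ) / t ≤ 2 * y ∧ dnint (β - t * γ) ≤ κ * (r / t)) :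
    (F.card : ℝ) ≤ 30 * κ * r := by
  have hy0 : 0 < y := by linarith
  have hκ0 : 0 < κ := pos_of_mul_pos_left (by linarith) (Nat.cast_nonneg s)
  have hδ : 1 ≤ s * (κ * (2 * y)) := by nlinarith
  have hcard := card_le_fifteen_mul hs ((le_div_iff₀ hy0).mpr hsr) hδ hsep (F := F) fun t ht => by
    obtain ⟨ht0, hyt, hty, hdist⟩ := hF t ht
    have ht0' : (0 : ℝ) < t := by exact_mod_cast ht0
    refine ⟨?_, hdist.trans (by gcongr)⟩
    rw [le_div_iff₀ ht0'] at hyt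
    rw [le_div_iff₀ hy0]
    linarith
  calc (F.card : ℝ) ≤ 15 * (r / y) * (κ * (2 * y)) := hcard
    _ = 30 * κ * r := by field_simp; ring

lemma DiophantineUpTo.card_le_logb_mul {c S T κ : ℝ} {r : ℕ} (hc : 0 < c) (hc1 : c ≤ 1)
    (hS : 0 ≤ S) (hT : 1 ≤ T) (hκ : 1 ≤ κ * T) (h : DiophantineUpTo γ c S (T ^ S / c))
    (hr : T ^ S / c * T ≤ r)
    (hF : ∀ t ∈ F, 0 < t ∧ t ≤ r ∧ (r : ℝ) < T * t ∧ dnint (β - t * γ) ≤ κ * (r / t)) :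
    (F.card : ℝ) ≤ (logb 2 T + 1) * (30 * κ * r) := by
  obtain ⟨s, hTs, hs, hsep⟩ := h.exists_separating_denominator hc hc1 hS hT
  have hT0 : 0 < T := by linarith
  have hs0 : 0 < s := by exact_mod_cast hT0.trans_le hTs
  have hκ0 : 0 < κ := pos_of_mul_pos_left (by linarith) hT0.le
  refine card_le_of_dyadic_blocks (x := fun t : ℕ => (r : ℝ) / t) hT (fun t ht => ?_)
    fun y hy hyT => ?_
  · obtain ⟨ht0, htr, hrt, -⟩ := hF t ht
    have ht0' : (0 : ℝ) < t := by exact_mod_cast ht0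
    exact ⟨(one_le_div ht0').mpr (by exact_mod_cast htr), (div_le_iff₀ ht0').mpr hrt.le⟩
  · refine card_le_thirty_mul_of_dyadic (β := β) hs0 hy (le_trans (by gcongr) hr)
      (hκ.trans (by gcongr)) hsep fun t ht => ?_
    obtain ⟨htF, hyt, hty⟩ := Finset.mem_filter.mp ht
    exact ⟨(hF t htF).1, hyt, hty, (hF t htF).2.2.2⟩

lemma card_le_div_add_card_filter_lt {r Y : ℝ} (hr : 0 ≤ r) (hY : 0 < Y) (hF : ∀ t ∈ F, 0 < t) :
    (F.card : ℝ) ≤ r / Y + (F.filter fun t : ℕ => r < Y * t).card := by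
  have hsub : F.filter (fun t : ℕ => ¬ r < Y * t) ⊆ Finset.Ioc 0 ⌊r / Y⌋₊ := by
    intro t ht
    obtain ⟨htF, htr⟩ := Finset.mem_filter.mp ht
    rw [Finset.mem_Ioc]
    refine ⟨hF t htF, Nat.le_floor ((le_div_iff₀ hY).mpr ?_)⟩
    linarith
  have hcard : ((F.filter fun t : ℕ => ¬ r < Y * t).card : ℝ) ≤ r / Y :=
    calc ((F.filter fun t : ℕ => ¬ r < Y * t).card : ℝ) ≤ (Finset.Ioc 0 ⌊r / Y⌋₊).card := by
          exact_mod_cast Finset.card_le_card hsub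
      _ = (⌊r / Y⌋₊ : ℝ) := by simp
      _ ≤ r / Y := Nat.floor_le (by positivity)
  rw [← Finset.card_filter_add_card_filter_not fun t : ℕ => r < Y * t]
  push_cast
  linarith

end Counting

section Overlap

variable {γ : ℝ} {ψ : ℕ → ℝ}

open Classical in
/-- The overlap sum `∑_{q' < q} (ψ(q)/q) gcd(q',q) 𝟙[‖γ(q-q')/gcd(q,q')‖ ≤ Δ(q,q')/gcd(q,q')]`. -/
noncomputable def overlapSum (γ : ℝ) (ψ : ℕ → ℝ) (q : ℕ) : ℝ :=
  ∑ q' ∈ Finset.Ico 1 q, (ψ q / q) * (Nat.gcd q' q : ℝ) *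
    (if dnint (γ * ((q : ℝ) - q') / (Nat.gcd q q' : ℝ))
        ≤ Δfun ψ q q' / (Nat.gcd q q' : ℝ) then 1 else 0)

open Classical in
/-- The cofactors `t < r` for which `q = d * r` and `q' = d * t` satisfy the overlap condition of
`overlapSum` with `d` in place of `gcd(q,q')`. Coprimality of `t` and `r` is not imposed: only an
upper bound for the number of overlaps is needed. -/
noncomputable def overlapCofactors (γ : ℝ) (ψ : ℕ → ℝ) (d r : ℕ) : Finset ℕ :=
  {t ∈ Finset.Ico 1 r | dnint (r * γ - t * γ) ≤ r * ψ (d * t) + t * ψ (d * r)}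

lemma mem_overlapCofactors {d r t : ℕ} :
    t ∈ overlapCofactors γ ψ d r ↔
      (0 < t ∧ t < r) ∧ dnint (r * γ - t * γ) ≤ r * ψ (d * t) + t * ψ (d * r) := by
  simp [overlapCofactors, Nat.one_le_iff_ne_zero, Nat.pos_iff_ne_zero]

lemma pos_of_mem_overlapCofactors {d r t : ℕ} (ht : t ∈ overlapCofactors γ ψ d r) : 0 < t :=
  (mem_overlapCofactors.mp ht).1.1

lemma overlapSum_le_mul (hψ0 : ∀ n, 0 ≤ ψ n) (q : ℕ) : overlapSum γ ψ q ≤ q * ψ q := by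
  rcases q.eq_zero_or_pos with rfl | hq
  · simp [overlapSum]
  have hq' : (0 : ℝ) < q := by exact_mod_cast hq
  have hterm : ∀ q' ∈ Finset.Ico 1 q, (ψ q / q) * (Nat.gcd q' q : ℝ) *
      (if dnint (γ * ((q : ℝ) - q') / (Nat.gcd q q' : ℝ))
        ≤ Δfun ψ q q' / (Nat.gcd q q' : ℝ) then 1 else 0) ≤ ψ q := by
    intro q' _
    calc _ ≤ ψ q / q * q * 1 := by
          gcongr
          · exact mul_nonneg (div_nonneg (hψ0 q) hq'.le) hq'.le
          · exact div_nonneg (hψ0 q) hq'.le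
          · exact Nat.gcd_le_right q' hq
          · split_ifs <;> norm_num
      _ = ψ q := by field_simp
  calc overlapSum γ ψ q ≤ (Finset.Ico 1 q).card • ψ q := Finset.sum_le_card_nsmul _ _ _ hterm
    _ ≤ q * ψ q := by
      rw [nsmul_eq_mul, Nat.card_Ico]
      gcongr
      · exact hψ0 q
      · exact Nat.sub_le q 1

lemma mem_image_overlapCofactors {q q' : ℕ} (hq' : q' ∈ Finset.Ico 1 q)
    (h : dnint (γ * ((q : ℝ) - q') / (Nat.gcd q q' : ℝ)) ≤ Δfun ψ q q' / (Nat.gcd q q' : ℝ)) :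
    q' ∈ (overlapCofactors γ ψ (q.gcd q') (q / q.gcd q')).image (q.gcd q' * ·) := by
  obtain ⟨hq'0, hlt⟩ := Finset.mem_Ico.mp hq'
  set d := q.gcd q'
  have hd : 0 < d := Nat.gcd_pos_of_pos_right q hq'0
  obtain ⟨r, hr⟩ : d ∣ q := Nat.gcd_dvd_left q q'
  obtain ⟨t, ht⟩ : d ∣ q' := Nat.gcd_dvd_right q q'
  clear_value d
  subst hr ht
  have hd' : (d : ℝ) ≠ 0 := by exact_mod_cast hd.ne'
  refine Finset.mem_image.mpr ⟨t, ?_, rfl⟩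
  rw [Nat.mul_div_cancel_left _ hd, mem_overlapCofactors]
  refine ⟨⟨Nat.pos_of_mul_pos_left hq'0, Nat.lt_of_mul_lt_mul_left hlt⟩, ?_⟩
  convert h using 1
  · push_cast
    congr 1
    field_simp
  · unfold Δfun
    push_cast
    field_simp

lemma overlapSum_le_sum_divisors (hψ0 : ∀ n, 0 ≤ ψ n) {q : ℕ} (hq : 0 < q) :
    overlapSum γ ψ q ≤
      ψ q * ∑ d ∈ q.divisors, ((overlapCofactors γ ψ d (q / d)).card : ℝ) / (q / d : ℕ) := by
  classical
  have hgcd : ∀ q' ∈ Finset.Ico 1 q, q.gcd q' ∈ q.divisors := fun q' _ =>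
    Nat.mem_divisors.mpr ⟨Nat.gcd_dvd_left q q', hq.ne'⟩
  rw [overlapSum, ← Finset.sum_fiberwise_of_maps_to hgcd, Finset.mul_sum]
  refine Finset.sum_le_sum fun d hd => ?_
  have hdq : d ∣ q := Nat.dvd_of_mem_divisors hd
  have hd0 : (0 : ℝ) < d := by exact_mod_cast Nat.pos_of_mem_divisors hd
  set overlaps := (Finset.Ico 1 q).filter fun q' => q.gcd q' = d ∧
    dnint (γ * ((q : ℝ) - q') / (Nat.gcd q q' : ℝ)) ≤ Δfun ψ q q' / (Nat.gcd q q' : ℝ)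
    with hoverlaps
  have hcard : overlaps.card ≤ (overlapCofactors γ ψ d (q / d)).card := by
    refine (Finset.card_le_card fun q' hq' => ?_).trans
      (Finset.card_image_le (f := (d * ·)))
    obtain ⟨hmem, rfl, hoverlap⟩ := Finset.mem_filter.mp hq'
    exact mem_image_overlapCofactors hmem hoverlap
  calc _ = ψ q / q * d * overlaps.card := by
        rw [hoverlaps, ← Finset.filter_filter, Finset.natCast_card_filter, Finset.mul_sum]
        refine Finset.sum_congr rfl fun q' hq' => ?_
        rw [Nat.gcd_comm q' q, (Finset.mem_filter.mp hq').2]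
    _ ≤ ψ q / q * d * (overlapCofactors γ ψ d (q / d)).card := by
        have := hψ0 q
        gcongr
    _ = ψ q * ((overlapCofactors γ ψ d (q / d)).card / (q / d : ℕ)) := by
        rw [Nat.cast_div hdq hd0.ne']
        field_simp

lemma overlap_threshold_le {B : ℝ} {d r t : ℕ} (hB : 0 ≤ B) (hd : 0 < d) (ht : 0 < t) (htr : t ≤ r)
    (hψt : ψ (d * t) ≤ B / (d * t : ℕ)) (hψr : ψ (d * r) ≤ B / (d * r : ℕ)) :
    r * ψ (d * t) + t * ψ (d * r) ≤ 2 * B / d * (r / t) := by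
  have hr' : (0 : ℝ) < r := by exact_mod_cast ht.trans_le htr
  have htr' : (t : ℝ) ≤ r := by exact_mod_cast htr
  calc r * ψ (d * t) + t * ψ (d * r) ≤ r * (B / (d * t : ℕ)) + t * (B / (d * r : ℕ)) := by gcongr
    _ = B / d * (r / t) + B / d * (t / r) := by push_cast; field_simp
    _ ≤ B / d * (r / t) + B / d * (r / t) := by gcongr
    _ = 2 * B / d * (r / t) := by ring

lemma card_overlapCofactors_le_two_mul_div {B c S X : ℝ} {d r : ℕ} (hc : 0 ≤ c) (hS : 0 ≤ S)
    (hX : 0 < X) (hB : 0 ≤ B) (hd : 0 < d) (h : DiophantineUpTo γ c S X)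
    (hψ : ∀ n, 0 < n → ψ n ≤ B / n) (hdX : 4 * B * X ^ (S + 1) < c * d) :
    ((overlapCofactors γ ψ d r).card : ℝ) ≤ 2 * r / X := by
  have hd' : (0 : ℝ) < d := by exact_mod_cast hd
  have hsep : ∀ m : ℕ, 0 < m → (m : ℝ) < X → 2 * (2 * B / d * X) < dnint (m * γ) := by
    refine fun m hm hmX => lt_of_lt_of_le ?_ (h.div_rpow_le_dnint hc hS hm hmX.le)
    rw [Real.rpow_add_one hX.ne'] at hdX
    have : 2 * (2 * B / d * X) = 4 * B * X / d := by ring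
    rw [this, div_lt_div_iff₀ hd' (Real.rpow_pos_of_pos hX S)]
    linarith
  have hlarge : (((overlapCofactors γ ψ d r).filter fun t : ℕ => r < X * t).card : ℝ) ≤ r / X := by
    refine card_le_of_two_mul_lt_dnint hX (by positivity) hsep fun t ht => ?_
    obtain ⟨htmem, hrt⟩ := Finset.mem_filter.mp ht
    obtain ⟨⟨ht0, htr⟩, hdist⟩ := mem_overlapCofactors.mp htmem
    have ht0' : (0 : ℝ) < t := by exact_mod_cast ht0
    refine ⟨htr, hdist.trans ((overlap_threshold_le hB hd ht0 htr.le (hψ _ (by positivity))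
      (hψ _ (Nat.mul_pos hd (by omega)))).trans ?_)⟩
    gcongr
    exact (div_le_iff₀ ht0').mpr hrt.le
  have hsplit := card_le_div_add_card_filter_lt (F := overlapCofactors γ ψ d r)
    (Nat.cast_nonneg r) hX fun _ => pos_of_mem_overlapCofactors
  calc _ ≤ r / X + r / X := hsplit.trans (by gcongr)
    _ = 2 * r / X := by ring

lemma mul_le_sq_of_le_mul {T : ℝ} {d r t : ℕ} (hT : T ^ 2 ≤ d * r) (hrt : r ≤ T * t) :
    d * r ≤ (d * t) ^ 2 := by
  rcases (d * r).eq_zero_or_pos with h0 | hdr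
  · omega
  have hdr' : (0 : ℝ) < d * r := by exact_mod_cast hdr
  have hsq : (d * r : ℝ) * (d * r) ≤ (d * t) ^ 2 * (d * r) :=
    calc (d * r : ℝ) * (d * r) ≤ d * (T * t) * (d * (T * t)) :=
          mul_self_le_mul_self hdr'.le (by gcongr)
      _ = (d * t) ^ 2 * T ^ 2 := by ring
      _ ≤ (d * t) ^ 2 * (d * r) := by gcongr
  exact_mod_cast le_of_mul_le_mul_right hsq hdr'

lemma card_overlapCofactors_le_logb_mul {B c S T κ : ℝ} {d r : ℕ} (hc : 0 < c) (hc1 : c ≤ 1)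
    (hS : 0 ≤ S) (hT : 1 ≤ T) (hB : 0 ≤ B) (hd : 0 < d) (hdT : d ≤ T)
    (h : DiophantineUpTo γ c S (d * r)) (hTr : T ^ (S + 2) ≤ c * (d * r))
    (hψ : ∀ n : ℕ, d * r ≤ n ^ 2 → ψ n ≤ B / n) (hBκ : 2 * B / d ≤ κ) (hκ : 1 ≤ κ * T) :
    ((overlapCofactors γ ψ d r).card : ℝ) ≤ r / T + (logb 2 T + 1) * (30 * κ * r) := by
  have hT0 : 0 < T := by linarith
  have hTS : T ^ (S + 2) = T ^ S * T ^ 2 := by exact_mod_cast Real.rpow_add hT0 S 2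
  have hone : 1 ≤ T ^ S := Real.one_le_rpow hT hS
  have hT2 : T ^ 2 ≤ T ^ (S + 2) := by
    rw [hTS]
    exact le_mul_of_one_le_left (by positivity) hone
  have hTq : T ^ 2 ≤ d * r := (hT2.trans hTr).trans (mul_le_of_le_one_left (by positivity) hc1)
  have hSr : T ^ S / c * T ≤ r := by
    rw [div_mul_eq_mul_div, div_le_iff₀ hc]
    refine le_of_mul_le_mul_right ?_ hT0
    calc T ^ S * T * T = T ^ (S + 2) := by rw [hTS]; ring
      _ ≤ c * (d * r) := hTr
      _ ≤ c * (T * r) := by gcongr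
      _ = r * c * T := by ring
  have hSq : T ^ S / c ≤ d * r := by
    rw [div_le_iff₀ hc, mul_comm _ c]
    exact (Real.rpow_le_rpow_of_exponent_le hT (by linarith)).trans hTr
  have hsmall := (h.mono hSq).card_le_logb_mul hc hc1 hS hT hκ hSr (β := r * γ)
    (F := (overlapCofactors γ ψ d r).filter fun t : ℕ => r < T * t) fun t ht => by
    obtain ⟨htmem, hrt⟩ := Finset.mem_filter.mp ht
    obtain ⟨⟨ht0, htr⟩, hdist⟩ := mem_overlapCofactors.mp htmem
    have hsq : d * r ≤ (d * t) ^ 2 := mul_le_sq_of_le_mul hTq hrt.le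
    have hsq' : d * r ≤ (d * r) ^ 2 := Nat.le_self_pow two_ne_zero _
    exact ⟨ht0, htr.le, hrt, hdist.trans ((overlap_threshold_le hB hd ht0 htr.le (hψ _ hsq)
      (hψ _ hsq')).trans (by gcongr))⟩
  have hsplit := card_le_div_add_card_filter_lt (F := overlapCofactors γ ψ d r)
    (Nat.cast_nonneg r) hT0 fun _ => pos_of_mem_overlapCofactors
  linarith

end Overlap
section Divisors

lemma card_divisors_le_two_pow_cardFactors {n : ℕ} (hn : n ≠ 0) :
    n.divisors.card ≤ 2 ^ ArithmeticFunction.cardFactors n := by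
  induction n using induction_on_primes with
  | zero => exact absurd rfl hn
  | one => simp
  | prime_mul p a hp ih =>
    have ha : a ≠ 0 := right_ne_zero_of_mul hn
    have hpcard : p.divisors.card = 2 := by rw [hp.divisors, Finset.card_pair hp.one_lt.ne]
    calc (p * a).divisors.card ≤ p.divisors.card * a.divisors.card := by
          classical
          rw [Nat.divisors_mul]
          exact Finset.card_mul_le
      _ ≤ 2 * 2 ^ ArithmeticFunction.cardFactors a := by
          rw [hpcard]
          exact Nat.mul_le_mul_left 2 (ih ha)
      _ = 2 ^ ArithmeticFunction.cardFactors (p * a) := by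
          rw [ArithmeticFunction.cardFactors_mul hp.ne_zero ha,
            ArithmeticFunction.cardFactors_apply_prime hp, pow_add, pow_one]

lemma sum_divisors_inv_sq_le_two (q : ℕ) : ∑ d ∈ q.divisors, ((d : ℝ) ^ 2)⁻¹ ≤ 2 := by
  calc ∑ d ∈ q.divisors, ((d : ℝ) ^ 2)⁻¹ ≤ ∑ d ∈ Finset.Ioo 0 (q + 1), ((d : ℝ) ^ 2)⁻¹ := by
        refine Finset.sum_le_sum_of_subset_of_nonneg (fun d hd => ?_) fun _ _ _ => by positivity
        exact Finset.mem_Ioo.mpr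
          ⟨Nat.pos_of_mem_divisors hd, Nat.lt_succ_of_le (Nat.divisor_le hd)⟩
    _ ≤ 2 / (((0 : ℕ) : ℝ) + 1) := sum_Ioo_inv_sq_le 0 (q + 1)
    _ = 2 := by norm_num

lemma logb_two_le_self {x : ℝ} (hx : 0 < x) : logb 2 x ≤ x := by
  have hlog2 : 0.69 < Real.log 2 := lt_trans (by norm_num) Real.log_two_gt_d9
  have hlog : Real.log (x / 2) ≤ x / 2 - 1 := Real.log_le_sub_one_of_pos (by positivity)
  rw [Real.log_div hx.ne' two_ne_zero] at hlog
  have hup : Real.log 2 ≤ 0.7 := (Real.log_two_lt_d9.trans (by norm_num)).le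
  rw [Real.logb, div_le_iff₀ (by linarith)]
  nlinarith

lemma logb_mul_sq_add_one_div_le {d L : ℝ} (hd : 0 < d) (hL : 2 ≤ L) :
    (logb 2 (d * L ^ 2) + 1) / (d * L ^ 2) ≤ 4 * L⁻¹ ^ 2 * (logb 2 d / d) + 3 / 2 * (d ^ 2)⁻¹ := by
  have hL0 : 0 < L := by linarith
  have hlogL : 1 ≤ logb 2 L := by
    rwa [Real.le_logb_iff_rpow_le one_lt_two hL0, Real.rpow_one]
  have hcompare : logb 2 L ≤ logb 2 d + L / d := by
    have := logb_two_le_self (div_pos hL0 hd)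
    rw [Real.logb_div hL0.ne' hd.ne'] at this
    linarith
  have hsplit : logb 2 (d * L ^ 2) = logb 2 d + 2 * logb 2 L := by
    rw [Real.logb_mul hd.ne' (by positivity), Real.logb_pow]
    norm_num
  calc (logb 2 (d * L ^ 2) + 1) / (d * L ^ 2)
      ≤ (4 * logb 2 d + L / 2 * (L * (3 / d))) / (d * L ^ 2) := by
        have : L * (3 / d) ≤ L / 2 * (L * (3 / d)) :=
          le_mul_of_one_le_left (by positivity) (by linarith)
        have : L * (3 / d) = 3 * (L / d) := by ring
        refine div_le_div_of_nonneg_right ?_ (by positivity)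
        linarith
    _ = 4 * L⁻¹ ^ 2 * (logb 2 d / d) + 3 / 2 * (d ^ 2)⁻¹ := by field_simp

lemma sum_divisors_logb_mul_sq_le {L : ℝ} (hL : 2 ≤ L) (q : ℕ) :
    ∑ d ∈ q.divisors, (logb 2 (d * L ^ 2) + 1) / (d * L ^ 2) ≤
      4 * L⁻¹ ^ 2 * ∑ d ∈ q.divisors, logb 2 d / d + 3 := by
  calc _ ≤ ∑ d ∈ q.divisors, (4 * L⁻¹ ^ 2 * (logb 2 d / d) + 3 / 2 * ((d : ℝ) ^ 2)⁻¹) :=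
        Finset.sum_le_sum fun d hd => logb_mul_sq_add_one_div_le
          (by exact_mod_cast Nat.pos_of_mem_divisors hd) hL
    _ ≤ _ := by
      rw [Finset.sum_add_distrib, ← Finset.mul_sum, ← Finset.mul_sum]
      linarith [sum_divisors_inv_sq_le_two q]

end Divisors

section OverlapBound

variable {γ : ℝ} {ψ : ℕ → ℝ}

lemma card_overlapCofactors_le_of_rpow_le {B c S L : ℝ} {d r : ℕ} (hc : 0 < c) (hc1 : c ≤ 1)
    (hS : 0 ≤ S) (hB : 0 ≤ B) (hL : 1 ≤ L) (hd : 0 < d) (h : DiophantineUpTo γ c S (d * r))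
    (hψ : ∀ n : ℕ, d * r ≤ n ^ 2 → ψ n ≤ B / L ^ 2 / n)
    (hdL : (d * L ^ 2) ^ (S + 2) ≤ c * (d * r)) :
    ((overlapCofactors γ ψ d r).card : ℝ) ≤
      (60 * B + 31) * ((logb 2 (d * L ^ 2) + 1) / (d * L ^ 2)) * r := by
  have hd' : (1 : ℝ) ≤ d := by exact_mod_cast hd
  have hdT : d ≤ d * L ^ 2 := le_mul_of_one_le_right (by linarith) (one_le_pow₀ hL)
  have hBT : 2 * (B / L ^ 2) / d = 2 * B / (d * L ^ 2) := by field_simp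
  set T := d * L ^ 2
  have hT : 1 ≤ T := hd'.trans hdT
  have hlogT : 0 ≤ logb 2 T := Real.logb_nonneg one_lt_two hT
  have hBκ : 2 * (B / L ^ 2) / d ≤ (2 * B + 1) / T := by
    rw [hBT]
    gcongr
    linarith
  have hκ : 1 ≤ (2 * B + 1) / T * T := by
    rw [div_mul_cancel₀ _ (by positivity)]
    linarith
  calc ((overlapCofactors γ ψ d r).card : ℝ)
      ≤ r / T + (logb 2 T + 1) * (30 * ((2 * B + 1) / T) * r) :=
        card_overlapCofactors_le_logb_mul hc hc1 hS hT (by positivity) hd hdT h hdL hψ hBκ hκ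
    _ ≤ (logb 2 T + 1) * (r / T) + (logb 2 T + 1) * (30 * ((2 * B + 1) / T) * r) := by
        gcongr
        exact le_mul_of_one_le_left (by positivity) (by linarith)
    _ = (60 * B + 31) * ((logb 2 T + 1) / T) * r := by ring

lemma card_overlapCofactors_div_le {A B c S X L : ℝ} {d r : ℕ} (hc : 0 < c) (hc1 : c ≤ 1)
    (hS : 0 ≤ S) (hX : 1 ≤ X) (hA : 0 ≤ A) (hB : 0 ≤ B) (hL : 1 ≤ L) (hd : 0 < d) (hr : 0 < r)
    (h : DiophantineUpTo γ c S (d * r)) (hψA : ∀ n, 0 < n → ψ n ≤ A / n)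
    (hψB : ∀ n : ℕ, d * r ≤ n ^ 2 → ψ n ≤ B / L ^ 2 / n)
    (hAX : 4 * A < c * X) (hLX : L ^ 2 ≤ X) (hXq : X ^ ((S + 3) * (S + 2)) ≤ c * (d * r)) :
    ((overlapCofactors γ ψ d r).card : ℝ) / r ≤
      2 / X + (60 * B + 31) * ((logb 2 (d * L ^ 2) + 1) / (d * L ^ 2)) := by
  have hd' : (1 : ℝ) ≤ d := by exact_mod_cast hd
  have hr' : (1 : ℝ) ≤ r := by exact_mod_cast hr
  have hX0 : 0 < X := by linarith
  have hlog : 0 ≤ logb 2 (d * L ^ 2) :=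
    Real.logb_nonneg one_lt_two (one_le_mul_of_one_le_of_one_le hd' (one_le_pow₀ hL))
  rw [div_le_iff₀ (by linarith)]
  rcases le_or_gt (X ^ (S + 2)) d with hlarge | hlt
  · have hXd : X ≤ d := (Real.self_le_rpow_of_one_le hX (by linarith)).trans hlarge
    have hAd : 4 * A * X ^ (S + 1) < c * d :=
      calc 4 * A * X ^ (S + 1) < c * X * X ^ (S + 1) := by gcongr
        _ = c * X ^ (S + 2) := by
          rw [show S + 2 = S + 1 + 1 by ring, Real.rpow_add_one hX0.ne' (S + 1)]
          ring
        _ ≤ c * d := by gcongr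
    calc ((overlapCofactors γ ψ d r).card : ℝ)
        ≤ 2 * r / X := card_overlapCofactors_le_two_mul_div hc.le hS hX0 hA hd
          (h.mono (hXd.trans (le_mul_of_one_le_right (by linarith) hr'))) hψA hAd
      _ = 2 / X * r := by ring
      _ ≤ _ := by gcongr; exact le_add_of_nonneg_right (by positivity)
  · have hdL : (d * L ^ 2) ^ (S + 2) ≤ c * (d * r) :=
      calc (d * L ^ 2) ^ (S + 2) ≤ (X ^ (S + 2) * X) ^ (S + 2) := by gcongr
        _ = X ^ ((S + 3) * (S + 2)) := by
          rw [← Real.rpow_add_one hX0.ne', ← Real.rpow_mul hX0.le]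
          congr 2
          ring
        _ ≤ c * (d * r) := hXq
    calc ((overlapCofactors γ ψ d r).card : ℝ)
        ≤ (60 * B + 31) * ((logb 2 (d * L ^ 2) + 1) / (d * L ^ 2)) * r :=
          card_overlapCofactors_le_of_rpow_le hc hc1 hS hB hL hd h hψB hdL
      _ ≤ _ := by gcongr; exact le_add_of_nonneg_left (by positivity)

lemma overlapSum_le_of_diophantine {A B c S X L : ℝ} {q : ℕ} (hc : 0 < c) (hc1 : c ≤ 1)
    (hS : 0 ≤ S) (hX : 1 ≤ X) (hA : 0 ≤ A) (hB : 0 ≤ B) (hL : 2 ≤ L) (hq : 0 < q)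
    (h : DiophantineUpTo γ c S q) (hψ0 : ∀ n, 0 ≤ ψ n) (hψA : ∀ n, 0 < n → ψ n ≤ A / n)
    (hψB : ∀ n : ℕ, q ≤ n ^ 2 → ψ n ≤ B / L ^ 2 / n)
    (hqX : (q.divisors.card : ℝ) ≤ X) (hAX : 4 * A < c * X) (hLX : L ^ 2 ≤ X)
    (hXq : X ^ ((S + 3) * (S + 2)) ≤ c * q) :
    overlapSum γ ψ q ≤
      4 * (60 * B + 31) * ψ q * L⁻¹ ^ 2 * ∑ d ∈ q.divisors, logb 2 d / d
        + (3 * (60 * B + 31) + 2) * ψ q := by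
  have hterm : ∀ d ∈ q.divisors, ((overlapCofactors γ ψ d (q / d)).card : ℝ) / (q / d : ℕ) ≤
      2 / X + (60 * B + 31) * ((logb 2 (d * L ^ 2) + 1) / (d * L ^ 2)) := by
    intro d hd
    obtain ⟨r, rfl⟩ := Nat.dvd_of_mem_divisors hd
    have hd0 := Nat.pos_of_mem_divisors hd
    have hr0 : 0 < r := Nat.pos_of_mul_pos_left hq
    rw [Nat.mul_div_cancel_left r hd0]
    push_cast at h hXq
    exact card_overlapCofactors_div_le hc hc1 hS hX hA hB (by linarith) hd0 hr0 h hψA hψB hAX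
      hLX hXq
  have hdiv : (q.divisors.card : ℝ) * (2 / X) ≤ 2 := by
    rw [mul_div_assoc', div_le_iff₀ (by linarith)]
    linarith
  calc overlapSum γ ψ q
      ≤ ψ q * ∑ d ∈ q.divisors, ((overlapCofactors γ ψ d (q / d)).card : ℝ) / (q / d : ℕ) :=
        overlapSum_le_sum_divisors hψ0 hq
    _ ≤ ψ q * ∑ d ∈ q.divisors,
          (2 / X + (60 * B + 31) * ((logb 2 (d * L ^ 2) + 1) / (d * L ^ 2))) :=
        mul_le_mul_of_nonneg_left (Finset.sum_le_sum hterm) (hψ0 q)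
    _ ≤ ψ q * (2 + (60 * B + 31) * (4 * L⁻¹ ^ 2 * ∑ d ∈ q.divisors, logb 2 d / d + 3)) := by
        rw [Finset.sum_add_distrib, Finset.sum_const, nsmul_eq_mul, ← Finset.mul_sum]
        have := hψ0 q
        have := sum_divisors_logb_mul_sq_le hL q
        gcongr
    _ = _ := by ring

end OverlapBound

section Tameness

variable {γ : ℝ}

lemma sigmaExp_set_nonempty (hγ : Irrational γ) (Q : ℕ) :
    {σ : ℝ | 0 < σ ∧ ∀ q : ℕ, 2 ≤ q → q ≤ Q → (q : ℝ) ^ (-σ) ≤ dnint (q * γ)}.Nonempty := by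
  have hlarge : ∀ᶠ σ : ℝ in atTop, ∀ q ∈ Finset.Icc 2 Q, (q : ℝ) ^ (-σ) ≤ dnint (q * γ) := by
    refine (Filter.eventually_all_finset _).mpr fun q hq => ?_
    have hq2 : 2 ≤ q := (Finset.mem_Icc.mp hq).1
    have hq1 : (1 : ℝ) < q := by exact_mod_cast hq2
    have hlim : Tendsto (fun σ : ℝ => (q : ℝ) ^ (-σ)) atTop (nhds 0) :=
      (tendsto_rpow_atBot_of_base_gt_one _ hq1).comp tendsto_neg_atTop_atBot
    exact hlim.eventually_le_const (dnint_pos_of_irrational (hγ.natCast_mul (by omega)))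
  obtain ⟨σ, hσ, hσ0⟩ := (hlarge.and (eventually_gt_atTop 0)).exists
  exact ⟨σ, hσ0, fun q h2 hQ => hσ q (Finset.mem_Icc.mpr ⟨h2, hQ⟩)⟩

lemma one_le_sigmaExp (hγ : Irrational γ) {Q : ℕ} (hQ : 2 ≤ Q) : 1 ≤ sigmaExp γ Q := by
  refine le_csInf (sigmaExp_set_nonempty hγ Q) fun σ hσ => ?_
  have hhalf : ((2 : ℕ) : ℝ) ^ (-σ) ≤ (2 : ℝ) ^ (-1 : ℝ) :=
    calc ((2 : ℕ) : ℝ) ^ (-σ) ≤ dnint ((2 : ℕ) * γ) := hσ.2 2 le_rfl hQ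
      _ ≤ 1 / 2 := dnint_le_half _
      _ = (2 : ℝ) ^ (-1 : ℝ) := by rw [Real.rpow_neg_one, one_div]
  push_cast at hhalf
  rw [Real.rpow_le_rpow_left_iff one_lt_two] at hhalf
  linarith

lemma diophantineUpTo_of_sigmaExp_lt (hγ : Irrational γ) {Q : ℕ} {S : ℝ} (hS : sigmaExp γ Q < S) :
    DiophantineUpTo γ (dnint γ) S Q := by
  obtain ⟨σ, ⟨-, hσ⟩, hσS⟩ := exists_lt_of_csInf_lt (sigmaExp_set_nonempty hγ Q) hS
  intro n hn hnQ
  obtain rfl | hn2 := (Nat.succ_le_of_lt hn).eq_or_lt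
  · simp
  have hn1 : (1 : ℝ) ≤ n := by exact_mod_cast hn
  calc dnint γ * (n : ℝ) ^ (-S) ≤ 1 * (n : ℝ) ^ (-σ) := by
        gcongr
        linarith [dnint_le_half γ]
    _ = (n : ℝ) ^ (-σ) := one_mul _
    _ ≤ dnint (n * γ) := hσ n hn2 (by exact_mod_cast hnQ)

lemma tendsto_logb_natCast_atTop : Tendsto (fun n : ℕ => logb 2 (n : ℝ)) atTop atTop :=
  (Real.tendsto_logb_atTop one_lt_two).comp tendsto_natCast_atTop_atTop

lemma nonneg_of_one_le_mul_logb_rpow {a K : ℝ}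
    (h : ∀ n : ℕ, 2 ≤ n → 1 ≤ K * (logb 2 n) ^ a) : 0 ≤ a := by
  by_contra! ha
  have hlim : Tendsto (fun n : ℕ => K * (logb 2 (n : ℝ)) ^ a) atTop (nhds (K * 0)) := by
    have := (tendsto_rpow_neg_atTop (neg_pos.mpr ha)).comp tendsto_logb_natCast_atTop
    simpa only [neg_neg, Function.comp_def] using this.const_mul K
  have hle : (1 : ℝ) ≤ K * 0 :=
    ge_of_tendsto hlim ((eventually_ge_atTop 2).mono h)
  linarith

end Tameness

section Asymptotics

variable {a b : ℝ}

lemma eventually_lt_mul_two_rpow_rpow {c : ℝ} (hb : 0 < b) (hc : 0 < c) (A : ℝ) :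
    ∀ᶠ l : ℝ in atTop, A < c * 2 ^ (l ^ b) :=
  (((tendsto_rpow_atTop_of_base_gt_one 2 one_lt_two).comp
    (tendsto_rpow_atTop hb)).const_mul_atTop hc).eventually_gt_atTop A

lemma eventually_logb_sq_le_two_rpow_rpow (hb : 0 < b) :
    ∀ᶠ l : ℝ in atTop, logb 2 l ^ 2 ≤ 2 ^ (l ^ b) := by
  have hlog :=
    ((isLittleO_log_rpow_rpow_atTop 2 hb).const_mul_left (Real.log 2 ^ 2)⁻¹).bound one_pos
  filter_upwards [hlog, eventually_gt_atTop 0] with l hl hl0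
  have hpow : 0 < l ^ b := Real.rpow_pos_of_pos hl0 b
  calc logb 2 l ^ 2 = (Real.log 2 ^ 2)⁻¹ * Real.log l ^ (2 : ℝ) := by
        rw [Real.rpow_two, Real.logb, div_pow]
        ring
    _ ≤ l ^ b := by
        simpa [abs_of_pos hpow] using (le_abs_self _).trans hl
    _ ≤ 2 ^ (l ^ b) := by
        rw [← Real.logb_le_iff_le_rpow one_lt_two hpow]
        exact logb_two_le_self hpow

lemma eventually_const_mul_rpow_add_le {e : ℝ} (he : e < 1) (M D : ℝ) :
    ∀ᶠ l : ℝ in atTop, M * l ^ e + D ≤ l := by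
  filter_upwards [(tendsto_rpow_atTop (sub_pos.mpr he)).eventually_ge_atTop (2 * M),
    eventually_ge_atTop (2 * D), eventually_gt_atTop 0] with l hM hD hl
  have hsplit : l ^ (1 - e) * l ^ e = l := by
    rw [← Real.rpow_add hl, sub_add_cancel, Real.rpow_one]
  have := mul_le_mul_of_nonneg_right hM (Real.rpow_nonneg hl.le e)
  linarith

lemma eventually_two_rpow_rpow_rpow_le {c K : ℝ} (ha : 0 ≤ a) (hab : b + 2 * a < 1) (hc : 0 < c)
    (hK : 0 ≤ K) :
    ∀ᶠ l : ℝ in atTop, ((2 : ℝ) ^ (l ^ b)) ^ ((K * l ^ a + 3) * (K * l ^ a + 2)) ≤ c * 2 ^ l := by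
  filter_upwards [eventually_const_mul_rpow_add_le hab ((K + 3) ^ 2) (-logb 2 c),
    eventually_ge_atTop 1] with l hl hl1
  have hl0 : 0 < l := by linarith
  have hone : 1 ≤ l ^ a := Real.one_le_rpow hl1 ha
  have hexp : l ^ b * ((K * l ^ a + 3) * (K * l ^ a + 2)) ≤ (K + 3) ^ 2 * l ^ (b + 2 * a) :=
    calc l ^ b * ((K * l ^ a + 3) * (K * l ^ a + 2))
        ≤ l ^ b * (((K + 3) * l ^ a) * ((K + 3) * l ^ a)) := by
          gcongr <;> linarith
      _ = (K + 3) ^ 2 * l ^ (b + 2 * a) := by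
          rw [Real.rpow_add hl0, two_mul, Real.rpow_add hl0]
          ring
  calc ((2 : ℝ) ^ (l ^ b)) ^ ((K * l ^ a + 3) * (K * l ^ a + 2))
      = 2 ^ (l ^ b * ((K * l ^ a + 3) * (K * l ^ a + 2))) := (Real.rpow_mul two_pos.le _ _).symm
    _ ≤ 2 ^ (logb 2 c + l) := Real.rpow_le_rpow_of_exponent_le one_le_two (by linarith)
    _ = c * 2 ^ l := by
      rw [Real.rpow_add two_pos, Real.rpow_logb two_pos one_lt_two.ne' hc]

end Asymptotics

section ApproximationFunction

variable {C : ℝ} {ψ : ℕ → ℝ}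

lemma logb_logb_pos {x : ℝ} (hx : 2 < x) : 0 < logb 2 (logb 2 x) := by
  refine Real.logb_pos one_lt_two ?_
  rwa [Real.lt_logb_iff_rpow_lt one_lt_two (by linarith), Real.rpow_one]

lemma logb_logb_le_logb_logb {x y : ℝ} (hx : 2 < x) (hxy : x ≤ y) :
    logb 2 (logb 2 x) ≤ logb 2 (logb 2 y) :=
  Real.logb_le_logb_of_le one_lt_two (Real.logb_pos one_lt_two (by linarith))
    (Real.logb_le_logb_of_le one_lt_two (by linarith) hxy)

lemma two_le_logb_logb {x : ℝ} (hx : 16 ≤ x) : 2 ≤ logb 2 (logb 2 x) := by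
  have h4 : (2 : ℝ) ^ (2 : ℝ) ≤ logb 2 x := by
    rw [Real.le_logb_iff_rpow_le one_lt_two (by linarith)]
    exact le_trans (by norm_num) hx
  rwa [Real.le_logb_iff_rpow_le one_lt_two (lt_of_lt_of_le (by positivity) h4)]

lemma logb_logb_sq {x : ℝ} (hx : 1 < x) : logb 2 (logb 2 (x ^ 2)) = logb 2 (logb 2 x) + 1 := by
  have hlog : 0 < logb 2 x := Real.logb_pos one_lt_two hx
  rw [Real.logb_pow, Real.logb_mul (by norm_num) hlog.ne', Nat.cast_two,
    Real.logb_self_eq_one one_lt_two, add_comm]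

lemma exists_le_div_of_le_div_logb_logb_sq (hC : 0 ≤ C) (hψ0 : ∀ n, 0 ≤ ψ n)
    (hub : ∀ n : ℕ, 3 ≤ n → ψ n ≤ C / (n * logb 2 (logb 2 n) ^ 2)) :
    ∃ A, 0 ≤ A ∧ ∀ n : ℕ, 0 < n → ψ n ≤ A / n := by
  have h1 := hψ0 1
  have h2 := hψ0 2
  have hL : 0 < logb 2 (logb 2 3) := logb_logb_pos (by norm_num)
  set A₃ := C / logb 2 (logb 2 3) ^ 2
  have hA₃ : 0 ≤ A₃ := by positivity
  refine ⟨A₃ + ψ 1 + 2 * ψ 2, by positivity, fun n hn => ?_⟩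
  have hn' : (0 : ℝ) < n := by exact_mod_cast hn
  rw [le_div_iff₀ hn']
  obtain rfl | rfl | hn3 : n = 1 ∨ n = 2 ∨ 3 ≤ n := by omega
  · push_cast
    linarith
  · push_cast
    linarith
  · have hn3' : (3 : ℝ) ≤ n := by exact_mod_cast hn3
    calc ψ n * n ≤ C / (n * logb 2 (logb 2 n) ^ 2) * n := by gcongr; exact hub n hn3
      _ = C / logb 2 (logb 2 n) ^ 2 := by field_simp
      _ ≤ C / logb 2 (logb 2 3) ^ 2 := by
        gcongr C / ?_ ^ 2
        exact logb_logb_le_logb_logb (by norm_num) hn3'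
      _ ≤ A₃ + ψ 1 + 2 * ψ 2 := by linarith

lemma le_div_logb_logb_sq_of_le_sq (hC : 0 ≤ C)
    (hub : ∀ n : ℕ, 3 ≤ n → ψ n ≤ C / (n * logb 2 (logb 2 n) ^ 2)) {n q : ℕ} (hq : 16 ≤ q)
    (hqn : q ≤ n ^ 2) : ψ n ≤ 4 * C / logb 2 (logb 2 q) ^ 2 / n := by
  have hn : 4 ≤ n := by nlinarith
  have hq' : (16 : ℝ) ≤ q := by exact_mod_cast hq
  have hn' : (4 : ℝ) ≤ n := by exact_mod_cast hn
  have hL := two_le_logb_logb hq'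
  have hcompare : logb 2 (logb 2 q) ≤ logb 2 (logb 2 n) + 1 := by
    rw [← logb_logb_sq (by linarith)]
    exact logb_logb_le_logb_logb (by linarith) (by exact_mod_cast hqn)
  calc ψ n ≤ C / (n * logb 2 (logb 2 n) ^ 2) := hub n (by omega)
    _ ≤ C / (n * (logb 2 (logb 2 q) / 2) ^ 2) := by gcongr; linarith
    _ = 4 * C / logb 2 (logb 2 q) ^ 2 / n := by field_simp; ring

end ApproximationFunction

section Tame

variable {γ : ℝ} {ψ : ℕ → ℝ}

lemma exists_overlapSum_le_of_eventually {C₁ C₂ : ℝ} (hC₁ : 0 < C₁) (hC₂ : 0 < C₂)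
    (hψ0 : ∀ n, 0 ≤ ψ n)
    (h : ∀ᶠ q : ℕ in atTop, overlapSum γ ψ q ≤
      C₁ * ψ q * (logb 2 (logb 2 q))⁻¹ ^ 2 * ∑ d ∈ q.divisors, logb 2 d / d + C₂ * ψ q) :
    ∃ C' > (0 : ℝ), ∃ C'' > (0 : ℝ), ∀ q : ℕ, overlapSum γ ψ q ≤
      C' * ψ q * (logb 2 (logb 2 q))⁻¹ ^ 2 * ∑ d ∈ q.divisors, logb 2 d / d + C'' * ψ q := by
  obtain ⟨N, hN⟩ := eventually_atTop.mp h
  refine ⟨C₁, hC₁, C₂ + N, by positivity, fun q => ?_⟩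
  have hψ := hψ0 q
  rcases le_total N q with hNq | hqN
  · refine (hN q hNq).trans ?_
    gcongr
    exact le_add_of_nonneg_right (Nat.cast_nonneg N)
  · have hsum : 0 ≤ ∑ d ∈ q.divisors, logb 2 d / d := Finset.sum_nonneg fun d hd =>
      div_nonneg (Real.logb_nonneg one_lt_two (by exact_mod_cast Nat.pos_of_mem_divisors hd))
        (Nat.cast_nonneg d)
    calc overlapSum γ ψ q ≤ q * ψ q := overlapSum_le_mul hψ0 q
      _ ≤ (C₂ + N) * ψ q := by
        gcongr
        exact le_add_of_nonneg_of_le hC₂.le (by exact_mod_cast hqN)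
      _ ≤ _ := le_add_of_nonneg_left (by positivity)

lemma eventually_overlapSum_le {a b c C K : ℝ} (ha : 0 ≤ a) (hb : 0 < b) (hab : b + 2 * a < 1)
    (hc : 0 < c) (hc1 : c ≤ 1) (hK : 0 ≤ K) (hC : 0 ≤ C)
    (hdio : ∀ Q : ℕ, 2 ≤ Q → DiophantineUpTo γ c (K * logb 2 Q ^ a) Q) (hψ0 : ∀ n, 0 ≤ ψ n)
    (hub : ∀ n : ℕ, 3 ≤ n → ψ n ≤ C / (n * logb 2 (logb 2 n) ^ 2))
    (hΩ : ∀ n : ℕ, 1 ≤ n → (n.primeFactorsList.length : ℝ) > logb 2 n ^ b → ψ n = 0) :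
    ∀ᶠ q : ℕ in atTop, overlapSum γ ψ q ≤
      4 * (60 * (4 * C) + 31) * ψ q * (logb 2 (logb 2 q))⁻¹ ^ 2 *
        ∑ d ∈ q.divisors, logb 2 d / d + (3 * (60 * (4 * C) + 31) + 2) * ψ q := by
  obtain ⟨A, hA, hψA⟩ := exists_le_div_of_le_div_logb_logb_sq hC hψ0 hub
  filter_upwards [eventually_ge_atTop 16,
    tendsto_logb_natCast_atTop.eventually (eventually_lt_mul_two_rpow_rpow hb hc (4 * A)),
    tendsto_logb_natCast_atTop.eventually (eventually_logb_sq_le_two_rpow_rpow hb),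
    tendsto_logb_natCast_atTop.eventually (eventually_two_rpow_rpow_rpow_le ha hab hc hK)]
    with q hq hAX hLX hXq
  rcases (hψ0 q).eq_or_lt with hψq | hψq
  · simpa [← hψq] using overlapSum_le_mul (γ := γ) hψ0 q
  have hq' : (16 : ℝ) ≤ q := by exact_mod_cast hq
  have hlog : 0 ≤ logb 2 (q : ℝ) := Real.logb_nonneg one_lt_two (by linarith)
  have hdivisors : (q.divisors.card : ℝ) ≤ 2 ^ (logb 2 (q : ℝ) ^ b) :=
    calc (q.divisors.card : ℝ) ≤ 2 ^ (q.primeFactorsList.length : ℝ) := by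
          rw [Real.rpow_natCast]
          exact_mod_cast card_divisors_le_two_pow_cardFactors (by omega : q ≠ 0)
      _ ≤ 2 ^ (logb 2 (q : ℝ) ^ b) :=
          Real.rpow_le_rpow_of_exponent_le one_le_two
            (not_lt.mp fun hlt => hψq.ne' (hΩ q (by omega) hlt))
  rw [Real.rpow_logb two_pos one_lt_two.ne' (by linarith)] at hXq
  exact overlapSum_le_of_diophantine hc hc1 (by positivity)
    (Real.one_le_rpow one_le_two (by positivity)) hA (by positivity) (two_le_logb_logb hq')
    (by omega) (hdio q (by omega)) hψ0 hψA
    (fun n hn => le_div_logb_logb_sq_of_le_sq hC hub hq hn) hdivisors hAX hLX hXq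

theorem stmt9_general {γ a b C K : ℝ} (hγ : Irrational γ)
    (htame : ∀ Q : ℕ, 2 ≤ Q → sigmaExp γ Q ≤ K * logb 2 Q ^ a)
    (hb : 0 < b) (hab : b + 2 * a < 1) (hC : 0 ≤ C) {ψ : ℕ → ℝ} (hψ0 : ∀ q, 0 ≤ ψ q)
    (hub : ∀ q : ℕ, 3 ≤ q → ψ q ≤ C / (q * logb 2 (logb 2 q) ^ 2))
    (hΩ : ∀ q : ℕ, 1 ≤ q → (q.primeFactorsList.length : ℝ) > logb 2 q ^ b → ψ q = 0) :
    ∃ C' > (0 : ℝ), ∃ C'' > (0 : ℝ), ∀ q : ℕ, 16 ≤ q →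
      overlapSum γ ψ q ≤ C' * ψ q * (logb 2 (logb 2 q))⁻¹ ^ 2 *
        (∑ r ∈ q.divisors, logb 2 r / r) + C'' * ψ q := by
  have hone : ∀ Q : ℕ, 2 ≤ Q → 1 ≤ K * logb 2 Q ^ a := fun Q hQ =>
    (one_le_sigmaExp hγ hQ).trans (htame Q hQ)
  have hK : 1 ≤ K := by simpa using hone 2 le_rfl
  have ha : 0 ≤ a := nonneg_of_one_le_mul_logb_rpow hone
  have hdio : ∀ Q : ℕ, 2 ≤ Q → DiophantineUpTo γ (dnint γ) ((K + 1) * logb 2 Q ^ a) Q := by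
    intro Q hQ
    refine diophantineUpTo_of_sigmaExp_lt hγ ((htame Q hQ).trans_lt ?_)
    have hlog : 0 < logb 2 (Q : ℝ) := Real.logb_pos one_lt_two (by exact_mod_cast hQ)
    have := Real.rpow_pos_of_pos hlog a
    linarith
  have hbound := eventually_overlapSum_le ha hb hab (dnint_pos_of_irrational hγ)
    ((dnint_le_half γ).trans (by norm_num)) (by linarith) hC hdio hψ0 hub hΩ
  obtain ⟨C', hC', C'', hC'', hall⟩ :=
    exists_overlapSum_le_of_eventually (by positivity) (by positivity) hψ0 hbound
  exact ⟨C', hC', C'', hC'', fun q _ => hall q⟩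

end Tame

open Classical in
theorem stmt9 (γ : ℝ) (hγ : Irrational γ)
    (ε₀ Cγ : ℝ) (hε₀ : 0 < ε₀) (hCγ : 0 < Cγ)
    (htame : ∀ Q : ℕ, 2 ≤ Q → sigmaExp γ Q ≤ Cγ * (Real.logb 2 Q) ^ ((1:ℝ)/4 - ε₀))
    (ε₁ : ℝ) (hε₁ : 0 < ε₁) (hε₁' : ε₁ < 2 * ε₀)
    (C : ℝ) (hC : 0 < C)
    (ψ : ℕ → ℝ) (hψ0 : ∀ q, 0 ≤ ψ q)
    (hub : ∀ q : ℕ, 3 ≤ q → ψ q ≤ C / ((q : ℝ) * (Real.logb 2 (Real.logb 2 q)) ^ 2))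
    (hψ1 : ψ 1 = 0) (hψ2 : ψ 2 = 0)
    (hΩ : ∀ q : ℕ, 1 ≤ q →
      ((q.primeFactorsList.length : ℝ) > (Real.logb 2 q) ^ ((1:ℝ)/2 + ε₁) → ψ q = 0)) :
    ∃ C' > (0:ℝ), ∃ C'' > (0:ℝ), ∀ q : ℕ, 16 ≤ q →
      ∑ q' ∈ Finset.Ico 1 q, (ψ q / q) * (Nat.gcd q' q : ℝ) *
        (if dnint (γ * ((q : ℝ) - q') / (Nat.gcd q q' : ℝ))
            ≤ Δfun ψ q q' / (Nat.gcd q q' : ℝ) then 1 else 0)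
      ≤ C' * ψ q * (Real.logb 2 (Real.logb 2 q))⁻¹ ^ 2 *
          (∑ r ∈ q.divisors, Real.logb 2 r / r)
        + C'' * ψ q :=
  stmt9_general hγ htame (by linarith) (by linarith) hC.le hψ0 hub hΩ
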